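/- Let $T$ and $S$ be commuting invertible measure preserving transformations of a probability space $(X,\mathcal{X},\mu)$, both ergodic, and let $\mu^{[k]}_T$ and $\mu^{[k]}_S$ be the box measures on $X^{2^k}$ defined inductively by relatively independent squaring over the invariant $\sigma$-algebras of $T^{[k]}$ and $S^{[k]}$ respectively. Then $\mu^{[k]}_T = \mu^{[k]}_S$ for every $k\geq 0$. -/

import Mathlib

/-!
Let `ρT` and `ρS` be the relatively independent squares of a measure `ν` over `T` and `S`, let `l`
be the square of `ρS` over `T × T` and `l'` that of `ρT` over `S × S`. The heart of the matter is
that `l` and `l'` differ only by the exchange of the two middle coordinates.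

For `F` in the span of tensors put `F_m y = F (y, S^m y)`. By the mean ergodic theorem, the average
over `m < M` of `‖E(F_m | T)‖²` tends, as `M → ∞`, to `∫ F ⊗ F` against the flip of `l'`. If instead
`E(F_m | T)` is replaced by its ergodic average of length `N` along `T`, the limit `M → ∞` followed
by `N → ∞` is `∫ F ⊗ F ∂l`. An ergodic average of `F_m` projects to `E(F_m | T)`, hence has at least
its norm, so `flip l' ≤ l` as quadratic forms, and symmetrically `flip l ≤ l'`.
Hence `B = l - flip l'` and `B' = l' - flip l` are positive semidefinite, while
`B (a ⊗ b, c ⊗ d) = -B' (a ⊗ c, b ⊗ d)`. Taking all arguments equal, `B` and `B'` vanish at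
`a ⊗ a`, and two applications of Cauchy–Schwarz make `B` vanish at all tensors.

If `ρT = ρS`, comparing `(T, S)` with `(S, S)` removes the flip, so that the squares of this common
measure over `T × T` and `S × S` agree. This is the induction step from `k` and `k + 1` to `k + 2`.
It starts because two ergodic transformations both have trivial invariant σ-algebras.
-/

open MeasureTheory Filter Finset

/-- The spaces `X^{[k]} = X^{2^k}`, realized as iterated squares. -/
def HKBox (X : Type*) : ℕ → Type _
  | 0 => X
  | (k+1) => HKBox X k × HKBox X k

def HKBox.instMS (X : Type*) [m : MeasurableSpace X] : ∀ k, MeasurableSpace (HKBox X k)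
  | 0 => m
  | (k+1) => @Prod.instMeasurableSpace _ _ (HKBox.instMS X k) (HKBox.instMS X k)

instance (X : Type*) [MeasurableSpace X] (k : ℕ) : MeasurableSpace (HKBox X k) :=
  HKBox.instMS X k

/-- The diagonal transformation `T^{[k]} = T × ⋯ × T` on `X^{[k]}`. -/
def HKBox.map {X : Type*} (T : X → X) : ∀ k, HKBox X k → HKBox X k
  | 0 => T
  | (k+1) => fun p => (HKBox.map T k p.1, HKBox.map T k p.2)

/-- The σ-algebra of invariant sets of a transformation. -/
def invSigma {α : Type*} [m : MeasurableSpace α] (f : α → α) : MeasurableSpace α where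
  MeasurableSet' s := MeasurableSet s ∧ f ⁻¹' s = s
  measurableSet_empty := ⟨MeasurableSet.empty, rfl⟩
  measurableSet_compl := fun s hs => ⟨hs.1.compl, by rw [Set.preimage_compl, hs.2]⟩
  measurableSet_iUnion := fun s hs => ⟨MeasurableSet.iUnion fun i => (hs i).1, by
    rw [Set.preimage_iUnion]; exact Set.iUnion_congr fun i => (hs i).2⟩

/-- The product of `f` over all `2^k` coordinates of `X^{[k]}`. -/
def HKBox.prodFun {X : Type*} (f : X → ℝ) : ∀ k, HKBox X k → ℝ
  | 0 => f
  | (k+1) => fun p => HKBox.prodFun f k p.1 * HKBox.prodFun f k p.2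

/-- `IsHKSeq μ T ν` asserts that `ν k` is the Host–Kra box measure `μ^{[k]}` of the
system `(X, μ, T)`: `ν 0 = μ` and `ν (k+1)` is the relatively independent square of
`ν k` over the σ-algebra of `T^{[k]}`-invariant sets. -/
def IsHKSeq {X : Type*} [MeasurableSpace X] (μ : Measure X) (T : X → X)
    (ν : ∀ k, Measure (HKBox X k)) : Prop :=
  ν 0 = μ ∧ ∀ k, (∀ F' F'' : HKBox X k → ℝ, Measurable F' → Measurable F'' →
    (∃ C, ∀ x, |F' x| ≤ C) → (∃ C, ∀ x, |F'' x| ≤ C) →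
    ∫ p, F' p.1 * F'' p.2 ∂(ν (k+1)) =
      ∫ x, ((ν k)[F' | invSigma (HKBox.map T k)]) x *
        ((ν k)[F'' | invSigma (HKBox.map T k)]) x ∂(ν k))

/-- The `k`-th Host–Kra seminorm of `f`, computed from a sequence `ν` of box measures:
`⦀f⦀_k = (∫ ∏_{ε} f(x_ε) dν k)^{1/2^k}`. -/
noncomputable def HKseminorm {X : Type*} [MeasurableSpace X]
    (ν : ∀ k, Measure (HKBox X k)) (k : ℕ) (f : X → ℝ) : ℝ :=
  (∫ x, HKBox.prodFun f k x ∂(ν k)) ^ (((2 : ℝ) ^ k)⁻¹)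

open MeasurableSpace (invariants invariants_le comp_eq_of_measurable_invariants)
open scoped Topology

section MeanErgodic

theorem birkhoffAverage_eq_smul_sum_comp {R α M : Type*} [DivisionSemiring R] [AddCommMonoid M]
    [Module R M] (U : α → α) (f : α → M) (N : ℕ) :
    birkhoffAverage R U f N = (N : R)⁻¹ • ∑ n ∈ range N, f ∘ U^[n] := by
  ext x
  simp [birkhoffAverage, birkhoffSum]

theorem starProjection_eqLocus_linearIsometry_apply {𝕜 E : Type*} [RCLike 𝕜]
    [NormedAddCommGroup E] [InnerProductSpace 𝕜 E] [CompleteSpace E] (K : E →ₗᵢ[𝕜] E) (x : E) :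
    (K.toContinuousLinearMap.eqLocus (1 : E →L[𝕜] E)).starProjection (K x) =
      (K.toContinuousLinearMap.eqLocus (1 : E →L[𝕜] E)).starProjection x := by
  rw [← sub_eq_zero, ← map_sub, Submodule.starProjection_apply_eq_zero_iff,
    Submodule.mem_orthogonal]
  intro y (hy : K y = y)
  rw [inner_sub_right, sub_eq_zero]
  nth_rw 1 [← hy]
  exact K.inner_map_map y x

theorem norm_starProjection_eqLocus_le_norm_birkhoffAverage {𝕜 E : Type*} [RCLike 𝕜]
    [NormedAddCommGroup E] [InnerProductSpace 𝕜 E] [CompleteSpace E] (K : E →ₗᵢ[𝕜] E) {N : ℕ}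
    (hN : N ≠ 0) (x : E) :
    ‖(K.toContinuousLinearMap.eqLocus (1 : E →L[𝕜] E)).starProjection x‖ ≤
      ‖birkhoffAverage 𝕜 K id N x‖ := by
  set P := (K.toContinuousLinearMap.eqLocus (1 : E →L[𝕜] E)).starProjection
  have hP : P (birkhoffAverage 𝕜 K id N x) = P x := by
    rw [map_birkhoffAverage 𝕜 𝕜 P]
    have hPK : (P ∘ id) ∘ K = P ∘ id :=
      funext fun y ↦ starProjection_eqLocus_linearIsometry_apply K y
    exact congrFun (birkhoffAverage_of_comp_eq 𝕜 hPK (Nat.cast_ne_zero.mpr hN)) x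
  rw [← hP]
  exact Submodule.norm_starProjection_apply_le _ _

theorem integral_mul_condExp {Ω : Type*} {m m₀ : MeasurableSpace Ω} {P : Measure[m₀] Ω}
    [IsFiniteMeasure P] {f g : Ω → ℝ} (hm : m ≤ m₀) (hf : MemLp f 2 P) (hg : MemLp g 2 P) :
    ∫ x, f x * (P[g | m]) x ∂P = ∫ x, (P[f | m]) x * (P[g | m]) x ∂P := by
  have hpull := condExp_mul_of_stronglyMeasurable_right (m := m) (f := f) stronglyMeasurable_condExp
    (hf.integrable_mul (hg.condExp one_le_two)) (hf.integrable one_le_two)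
  exact (integral_condExp hm).symm.trans (integral_congr_ae hpull)

variable {Y : Type*} [MeasurableSpace Y] {ν : Measure Y} {U : Y → Y} {f g : Y → ℝ}

theorem aestronglyMeasurable_invariants_of_comp_ae_eq
    (hU : Measure.QuasiMeasurePreserving U ν ν) (hf : AEMeasurable f ν) (hinv : f ∘ U =ᵐ[ν] f) :
    AEStronglyMeasurable[invariants U] f ν := by
  -- The limsup along orbits is a strictly invariant version of `f`.
  let g : Y → ℝ := fun x ↦ limsup (fun n ↦ hf.mk f (U^[n] x)) atTop
  have hg : Measurable[invariants U] g := by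
    refine MeasurableSpace.measurable_invariants_dom.mpr
      ⟨.limsup fun n ↦ hf.measurable_mk.comp (hU.measurable.iterate n), fun s _ ↦ ?_⟩
    have hgU : g ∘ U = g :=
      funext fun x ↦ limsup_nat_add (fun n ↦ hf.mk f (U^[n] x)) 1
    rw [hgU]
  have hmk : ∀ᵐ x ∂ν, ∀ n, f (U^[n] x) = hf.mk f (U^[n] x) :=
    ae_all_iff.mpr fun n ↦ (hU.iterate n).ae hf.ae_eq_mk
  have hiter : ∀ᵐ x ∂ν, ∀ n, f (U^[n] x) = f x := ae_all_iff.mpr fun n ↦ by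
    induction n with
    | zero => exact .of_forall fun _ ↦ rfl
    | succ n ih =>
      filter_upwards [hU.ae ih, hinv] with x hx hx'
      exact hx.trans hx'
  refine ⟨g, hg.stronglyMeasurable, ?_⟩
  filter_upwards [hmk, hiter] with x hx hx'
  simp only [g, ← hx, hx', limsup_const]

theorem eqLocus_compMeasurePreserving_eq_lpMeas {p : ENNReal} [Fact (1 ≤ p)]
    (hU : MeasurePreserving U ν ν) :
    (Lp.compMeasurePreservingₗᵢ ℝ U hU).toContinuousLinearMap.eqLocus
      (1 : Lp ℝ p ν →L[ℝ] Lp ℝ p ν) = lpMeas ℝ ℝ (invariants U) p ν := by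
  ext h
  have hcoe := Lp.coeFn_compMeasurePreserving h hU
  rw [mem_lpMeas_iff_aestronglyMeasurable]
  constructor
  · intro (hh : Lp.compMeasurePreserving U hU h = h)
    rw [hh] at hcoe
    exact aestronglyMeasurable_invariants_of_comp_ae_eq hU.quasiMeasurePreserving
      (Lp.aestronglyMeasurable h).aemeasurable hcoe.symm
  · intro hh
    have hmk : hh.mk h ∘ U = hh.mk h :=
      comp_eq_of_measurable_invariants hh.stronglyMeasurable_mk.measurable
    have hcomp : h ∘ U =ᵐ[ν] hh.mk h ∘ U :=
      hU.quasiMeasurePreserving.ae_eq_comp hh.ae_eq_mk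
    rw [hmk] at hcomp
    exact Lp.ext (hcoe.trans (hcomp.trans hh.ae_eq_mk.symm))

theorem memLp_birkhoffAverage {p : ENNReal} (hU : MeasurePreserving U ν ν) (hf : MemLp f p ν)
    (N : ℕ) : MemLp (birkhoffAverage ℝ U f N) p ν := by
  rw [birkhoffAverage_eq_smul_sum_comp]
  exact (memLp_finsetSum' _ fun n _ ↦ hf.comp_measurePreserving (hU.iterate n)).const_smul _

theorem birkhoffAverage_compMeasurePreserving_toLp {p : ENNReal} [Fact (1 ≤ p)]
    (hU : MeasurePreserving U ν ν) (hf : MemLp f p ν) (N : ℕ) :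
    birkhoffAverage ℝ (Lp.compMeasurePreservingₗᵢ ℝ U hU) id N (hf.toLp f) =
      (memLp_birkhoffAverage hU hf N).toLp _ := by
  have hfn (n : ℕ) : MemLp (f ∘ U^[n]) p ν := hf.comp_measurePreserving (hU.iterate n)
  have hiter (n : ℕ) : (Lp.compMeasurePreservingₗᵢ ℝ U hU)^[n] (hf.toLp f) = (hfn n).toLp _ := by
    rw [← Lp.toLp_compMeasurePreserving hf (hU.iterate n), ← Lp.compMeasurePreserving_iterate hU n]
    rfl
  simp only [birkhoffAverage, birkhoffSum, hiter, id]
  refine Lp.ext ((Lp.coeFn_smul _ _).trans (EventuallyEq.trans ?_ (MemLp.coeFn_toLp _).symm))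
  filter_upwards [ae_all_iff.mpr fun n ↦ (hfn n).coeFn_toLp,
    Lp.coeFn_finsetSum (range N) fun n ↦ (hfn n).toLp _] with x hx hsum
  simp only [Pi.smul_apply, hsum, Finset.sum_apply, hx, Function.comp_apply, birkhoffAverage,
    birkhoffSum]

theorem inner_toLp_toLp_real (hf : MemLp f 2 ν) (hg : MemLp g 2 ν) :
    inner ℝ (hf.toLp f) (hg.toLp g) = ∫ x, f x * g x ∂ν := by
  rw [L2.inner_def]
  refine integral_congr_ae ?_
  filter_upwards [hf.coeFn_toLp, hg.coeFn_toLp] with x hx hx'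
  rw [hx, hx', RCLike.inner_apply', conj_trivial]

variable [IsFiniteMeasure ν]

theorem starProjection_eqLocus_toLp (hU : MeasurePreserving U ν ν) (hf : MemLp f 2 ν) :
    ((Lp.compMeasurePreservingₗᵢ ℝ U hU).toContinuousLinearMap.eqLocus
      (1 : Lp ℝ 2 ν →L[ℝ] Lp ℝ 2 ν)).starProjection (hf.toLp f) =
      (hf.condExp one_le_two).toLp (ν[f | invariants U]) := by
  have : Fact (invariants U ≤ ‹MeasurableSpace Y›) := ⟨invariants_le U⟩
  simp only [eqLocus_compMeasurePreserving_eq_lpMeas]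
  refine Lp.ext ?_
  refine (hf.condExpL2_ae_eq_condExp (𝕜 := ℝ) (invariants_le U)).trans (MemLp.coeFn_toLp _).symm

theorem tendsto_toLp_birkhoffAverage (hU : MeasurePreserving U ν ν) (hf : MemLp f 2 ν) :
    Tendsto (fun N ↦ (memLp_birkhoffAverage hU hf N).toLp _) atTop
      (𝓝 ((hf.condExp one_le_two).toLp (ν[f | invariants U]))) := by
  let K : Lp ℝ 2 ν →ₗᵢ[ℝ] Lp ℝ 2 ν := Lp.compMeasurePreservingₗᵢ ℝ U hU
  rw [← starProjection_eqLocus_toLp hU hf]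
  exact (K.toContinuousLinearMap.tendsto_birkhoffAverage_orthogonalProjection
    K.norm_toContinuousLinearMap_le (hf.toLp f)).congr
      fun N ↦ birkhoffAverage_compMeasurePreserving_toLp hU hf N

theorem tendsto_integral_mul_birkhoffAverage (hU : MeasurePreserving U ν ν) (hf : MemLp f 2 ν)
    (hg : MemLp g 2 ν) :
    Tendsto (fun N ↦ ∫ x, f x * birkhoffAverage ℝ U g N x ∂ν) atTop
      (𝓝 (∫ x, (ν[f | invariants U]) x * (ν[g | invariants U]) x ∂ν)) := by
  rw [← integral_mul_condExp (invariants_le U) hf hg]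
  simpa only [inner_toLp_toLp_real] using
    tendsto_const_nhds.inner (𝕜 := ℝ) (tendsto_toLp_birkhoffAverage hU hg) (f := fun _ ↦ hf.toLp f)

theorem tendsto_integral_birkhoffAverage_sq (hU : MeasurePreserving U ν ν) (hf : MemLp f 2 ν) :
    Tendsto (fun N ↦ ∫ x, birkhoffAverage ℝ U f N x ^ 2 ∂ν) atTop
      (𝓝 (∫ x, (ν[f | invariants U]) x ^ 2 ∂ν)) := by
  simpa only [inner_toLp_toLp_real, pow_two] using
    (tendsto_toLp_birkhoffAverage hU hf).inner (𝕜 := ℝ) (tendsto_toLp_birkhoffAverage hU hf)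

theorem integral_condExp_sq_le_integral_birkhoffAverage_sq (hU : MeasurePreserving U ν ν)
    (hf : MemLp f 2 ν) {N : ℕ} (hN : N ≠ 0) :
    ∫ x, (ν[f | invariants U]) x ^ 2 ∂ν ≤ ∫ x, birkhoffAverage ℝ U f N x ^ 2 ∂ν := by
  have h := norm_starProjection_eqLocus_le_norm_birkhoffAverage
    (Lp.compMeasurePreservingₗᵢ ℝ U hU) hN (hf.toLp f)
  rw [starProjection_eqLocus_toLp, birkhoffAverage_compMeasurePreserving_toLp] at h
  simpa only [← real_inner_self_eq_norm_sq, inner_toLp_toLp_real, ← pow_two] using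
    pow_le_pow_left₀ (norm_nonneg _) h 2

end MeanErgodic

section TensorSpan

/-- The algebra of bounded measurable real functions on `Y`. -/
def boundedMeasurable (Y : Type*) [MeasurableSpace Y] : Subalgebra ℝ (Y → ℝ) where
  carrier := {f | Measurable f ∧ ∃ C, ∀ x, |f x| ≤ C}
  mul_mem' := fun {f g} ⟨hf, C, hC⟩ ⟨hg, D, hD⟩ ↦ ⟨hf.mul hg, C * D, fun x ↦ by
    rw [Pi.mul_apply, abs_mul]
    exact mul_le_mul (hC x) (hD x) (abs_nonneg _) ((abs_nonneg _).trans (hC x))⟩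
  add_mem' := fun ⟨hf, C, hC⟩ ⟨hg, D, hD⟩ ↦
    ⟨hf.add hg, C + D, fun x ↦ (abs_add_le _ _).trans (add_le_add (hC x) (hD x))⟩
  algebraMap_mem' := fun r ↦ ⟨measurable_const, |r|, fun _ ↦ le_rfl⟩

/-- The linear span of the functions `f ⊗ g : (y, z) ↦ f y * g z` with `f` and `g` bounded and
measurable. -/
def tensorSpan (Y Z : Type*) [MeasurableSpace Y] [MeasurableSpace Z] :
    Submodule ℝ (Y × Z → ℝ) :=
  Submodule.span ℝ {H | ∃ f ∈ boundedMeasurable Y, ∃ g ∈ boundedMeasurable Z,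
    H = fun p ↦ f p.1 * g p.2}

variable {Y Y' Z Z' : Type*} [MeasurableSpace Y] [MeasurableSpace Y'] [MeasurableSpace Z]
  [MeasurableSpace Z'] {f : Y → ℝ} {g : Z → ℝ} {F G : Y × Z → ℝ}

theorem comp_mem_boundedMeasurable (hg : g ∈ boundedMeasurable Z) {U : Y → Z}
    (hU : Measurable U) : (fun y ↦ g (U y)) ∈ boundedMeasurable Y :=
  ⟨hg.1.comp hU, hg.2.imp fun _ hC y ↦ hC (U y)⟩

theorem indicator_one_mem_boundedMeasurable {s : Set Y} (hs : MeasurableSet s) :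
    s.indicator 1 ∈ boundedMeasurable Y := by
  refine ⟨measurable_one.indicator hs, 1, fun y ↦ ?_⟩
  by_cases hy : y ∈ s <;> simp [hy]

theorem memLp_of_mem_boundedMeasurable (hf : f ∈ boundedMeasurable Y) (ν : Measure Y)
    [IsFiniteMeasure ν] (p : ENNReal) : MemLp f p ν :=
  hf.2.elim fun C hC ↦ .of_bound hf.1.aestronglyMeasurable C (.of_forall hC)

theorem integrable_of_mem_boundedMeasurable (hf : f ∈ boundedMeasurable Y) (ν : Measure Y)
    [IsFiniteMeasure ν] : Integrable f ν :=
  memLp_one_iff_integrable.mp (memLp_of_mem_boundedMeasurable hf ν 1)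

theorem tensor_mem_boundedMeasurable (hf : f ∈ boundedMeasurable Y)
    (hg : g ∈ boundedMeasurable Z) :
    (fun p : Y × Z ↦ f p.1 * g p.2) ∈ boundedMeasurable (Y × Z) :=
  mul_mem (comp_mem_boundedMeasurable hf measurable_fst)
    (comp_mem_boundedMeasurable hg measurable_snd)

theorem tensor_mem_tensorSpan (hf : f ∈ boundedMeasurable Y) (hg : g ∈ boundedMeasurable Z) :
    (fun p : Y × Z ↦ f p.1 * g p.2) ∈ tensorSpan Y Z :=
  Submodule.subset_span ⟨f, hf, g, hg, rfl⟩

/-- The tensor product `f ⊗ g` of two bounded measurable functions. -/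
def tensor (f : boundedMeasurable Y) (g : boundedMeasurable Z) : tensorSpan Y Z :=
  ⟨fun p ↦ f.1 p.1 * g.1 p.2, tensor_mem_tensorSpan f.2 g.2⟩

theorem tensorSpan_le_boundedMeasurable :
    tensorSpan Y Z ≤ Subalgebra.toSubmodule (boundedMeasurable (Y × Z)) := by
  refine Submodule.span_le.mpr ?_
  rintro _ ⟨f, hf, g, hg, rfl⟩
  exact tensor_mem_boundedMeasurable hf hg

theorem mul_mem_tensorSpan (hF : F ∈ tensorSpan Y Z) (hG : G ∈ tensorSpan Y Z) :
    F * G ∈ tensorSpan Y Z := by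
  have hFG := Submodule.mul_mem_mul hF hG
  rw [tensorSpan, Submodule.span_mul_span] at hFG
  refine Submodule.span_mono ?_ hFG
  rintro _ ⟨_, ⟨f, hf, g, hg, rfl⟩, _, ⟨f', hf', g', hg', rfl⟩, rfl⟩
  exact ⟨f * f', mul_mem hf hf', g * g', mul_mem hg hg', funext fun p ↦ mul_mul_mul_comm ..⟩

theorem comp_prodMap_mem_tensorSpan (hF : F ∈ tensorSpan Y Z) {U : Y' → Y} {V : Z' → Z}
    (hU : Measurable U) (hV : Measurable V) :
    F ∘ Prod.map U V ∈ tensorSpan Y' Z' := by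
  have hle : tensorSpan Y Z ≤
      (tensorSpan Y' Z').comap (LinearMap.funLeft ℝ ℝ (Prod.map U V)) := by
    refine Submodule.span_le.mpr ?_
    rintro _ ⟨f, hf, g, hg, rfl⟩
    exact tensor_mem_tensorSpan (comp_mem_boundedMeasurable hf hU)
      (comp_mem_boundedMeasurable hg hV)
  exact hle hF

theorem birkhoffAverage_prodMap_mem_tensorSpan (hF : F ∈ tensorSpan Y Z) {U : Y → Y} {V : Z → Z}
    (hU : Measurable U) (hV : Measurable V) (N : ℕ) :
    birkhoffAverage ℝ (Prod.map U V) F N ∈ tensorSpan Y Z := by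
  simp only [birkhoffAverage_eq_smul_sum_comp, Prod.map_iterate]
  exact Submodule.smul_mem _ _ (Submodule.sum_mem _ fun n _ ↦
    comp_prodMap_mem_tensorSpan hF (hU.iterate n) (hV.iterate n))

theorem measure_eq_of_integral_indicator_eq {ρ ρ' : Measure Y} [IsFiniteMeasure ρ]
    [IsFiniteMeasure ρ'] {s : Set Y} (hs : MeasurableSet s)
    (h : ∫ y, s.indicator 1 y ∂ρ = ∫ y, s.indicator (1 : Y → ℝ) y ∂ρ') : ρ s = ρ' s := by
  rwa [integral_indicator_one hs, integral_indicator_one hs, measureReal_eq_measureReal_iff] at h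

theorem indicator_prod_one_apply {α β : Type*} (s : Set α) (t : Set β) (p : α × β) :
    (s ×ˢ t).indicator (1 : α × β → ℝ) p = s.indicator 1 p.1 * t.indicator 1 p.2 := by
  by_cases hs : p.1 ∈ s <;> by_cases ht : p.2 ∈ t <;> simp [Set.indicator, hs, ht]

theorem measure_ext_of_integral_tensor {ρ ρ' : Measure (Y × Z)} [IsFiniteMeasure ρ]
    [IsFiniteMeasure ρ']
    (h : ∀ f ∈ boundedMeasurable Y, ∀ g ∈ boundedMeasurable Z,
      ∫ p, f p.1 * g p.2 ∂ρ = ∫ p, f p.1 * g p.2 ∂ρ') : ρ = ρ' := by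
  refine Measure.ext_prod fun {s t} hs ht ↦ measure_eq_of_integral_indicator_eq (hs.prod ht) ?_
  simp only [indicator_prod_one_apply]
  exact h _ (indicator_one_mem_boundedMeasurable hs) _ (indicator_one_mem_boundedMeasurable ht)

theorem measure_ext_of_integral_tensor_tensor {ρ ρ' : Measure ((Y × Y') × (Z × Z'))}
    [IsFiniteMeasure ρ] [IsFiniteMeasure ρ']
    (h : ∀ a ∈ boundedMeasurable Y, ∀ b ∈ boundedMeasurable Y', ∀ c ∈ boundedMeasurable Z,
      ∀ d ∈ boundedMeasurable Z', ∫ p, (a p.1.1 * b p.1.2) * (c p.2.1 * d p.2.2) ∂ρ =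
        ∫ p, (a p.1.1 * b p.1.2) * (c p.2.1 * d p.2.2) ∂ρ') : ρ = ρ' := by
  have hbox {s : Set Y} {t : Set Y'} {u : Set Z} {v : Set Z'} (hs : MeasurableSet s)
      (ht : MeasurableSet t) (hu : MeasurableSet u) (hv : MeasurableSet v) :
      ρ ((s ×ˢ t) ×ˢ (u ×ˢ v)) = ρ' ((s ×ˢ t) ×ˢ (u ×ˢ v)) := by
    refine measure_eq_of_integral_indicator_eq ((hs.prod ht).prod (hu.prod hv)) ?_
    simp only [indicator_prod_one_apply]
    exact h _ (indicator_one_mem_boundedMeasurable hs) _ (indicator_one_mem_boundedMeasurable ht)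
      _ (indicator_one_mem_boundedMeasurable hu) _ (indicator_one_mem_boundedMeasurable hv)
  refine ext_of_generate_finite _
    (generateFrom_eq_prod generateFrom_prod generateFrom_prod
      (isCountablySpanning_measurableSet.prod isCountablySpanning_measurableSet)
      (isCountablySpanning_measurableSet.prod isCountablySpanning_measurableSet)).symm
    (isPiSystem_prod.prod isPiSystem_prod) ?_ ?_
  · rintro _ ⟨_, ⟨s, hs, t, ht, rfl⟩, _, ⟨u, hu, v, hv, rfl⟩, rfl⟩
    exact hbox hs ht hu hv
  · simpa only [Set.univ_prod_univ] using hbox .univ .univ .univ .univ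

end TensorSpan

section RelIndepSquare

/-- `ρ` is the relatively independent joining of `ν` with itself over the σ-algebra of
`U`-invariant sets, tested on bounded measurable functions. -/
def IsRelIndepSquare {Y : Type*} [MeasurableSpace Y] (ν : Measure Y) (U : Y → Y)
    (ρ : Measure (Y × Y)) : Prop :=
  ∀ f ∈ boundedMeasurable Y, ∀ g ∈ boundedMeasurable Y, ∫ p, f p.1 * g p.2 ∂ρ =
    ∫ x, (ν[f | invariants U]) x * (ν[g | invariants U]) x ∂ν

variable {Y : Type*} [MeasurableSpace Y] {ν : Measure Y} {ρ : Measure (Y × Y)} {U V : Y → Y}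

namespace IsRelIndepSquare

theorem isProbabilityMeasure [IsProbabilityMeasure ν] (h : IsRelIndepSquare ν U ρ) :
    IsProbabilityMeasure ρ := by
  have h1 := h 1 (one_mem _) 1 (one_mem _)
  have hone : ν[(1 : Y → ℝ) | invariants U] = 1 := condExp_const (invariants_le U) 1
  simp only [hone, Pi.one_apply, mul_one, integral_const, smul_eq_mul, probReal_univ] at h1
  exact ⟨(ENNReal.toReal_eq_one_iff _).mp h1⟩

theorem measurePreserving_swap [IsFiniteMeasure ρ] (h : IsRelIndepSquare ν U ρ) :
    MeasurePreserving Prod.swap ρ ρ := by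
  refine ⟨measurable_swap, measure_ext_of_integral_tensor fun f hf g hg ↦ ?_⟩
  rw [integral_map measurable_swap.aemeasurable
    (tensor_mem_boundedMeasurable hf hg).1.aestronglyMeasurable, h f hf g hg]
  simpa only [mul_comm, Prod.fst_swap, Prod.snd_swap] using h g hg f hf

theorem eq_of_condExp_ae_eq [IsProbabilityMeasure ν] {ρ' : Measure (Y × Y)}
    (hρ : IsRelIndepSquare ν U ρ) (hρ' : IsRelIndepSquare ν V ρ')
    (h : ∀ f : Y → ℝ, ν[f | invariants U] =ᵐ[ν] ν[f | invariants V]) : ρ = ρ' := by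
  have := hρ.isProbabilityMeasure
  have := hρ'.isProbabilityMeasure
  refine measure_ext_of_integral_tensor fun f hf g hg ↦ ?_
  rw [hρ f hf g hg, hρ' f hf g hg]
  exact integral_congr_ae ((h f).mul (h g))

theorem tendsto_average_integral [IsFiniteMeasure ν] [IsFiniteMeasure ρ]
    (h : IsRelIndepSquare ν U ρ) (hU : MeasurePreserving U ν ν) {H : Y × Y → ℝ}
    (hH : H ∈ tensorSpan Y Y) :
    Tendsto (fun N : ℕ ↦ (N : ℝ)⁻¹ * ∑ n ∈ range N, ∫ x, H (x, U^[n] x) ∂ν) atTop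
      (𝓝 (∫ p, H p ∂ρ)) := by
  have hint {G : Y × Y → ℝ} (hG : G ∈ tensorSpan Y Y) (n : ℕ) :
      Integrable (fun x ↦ G (x, U^[n] x)) ν :=
    integrable_of_mem_boundedMeasurable (comp_mem_boundedMeasurable
      (tensorSpan_le_boundedMeasurable hG)
      (measurable_id.prodMk (hU.measurable.iterate n))) ν
  induction hH using Submodule.span_induction with
  | mem H hH =>
    obtain ⟨f, hf, g, hg, rfl⟩ := hH
    rw [h f hf g hg]
    refine (tendsto_integral_mul_birkhoffAverage hU (memLp_of_mem_boundedMeasurable hf ν 2)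
      (memLp_of_mem_boundedMeasurable hg ν 2)).congr fun N ↦ ?_
    rw [← integral_finsetSum _ fun n _ ↦ hint (tensor_mem_tensorSpan hf hg) n,
      ← integral_const_mul]
    simp only [birkhoffAverage, birkhoffSum, smul_eq_mul, mul_sum, mul_left_comm]
  | zero => simp
  | add G H hG hH ihG ihH =>
    have hρ {G : Y × Y → ℝ} (hG : G ∈ tensorSpan Y Y) : Integrable G ρ :=
      integrable_of_mem_boundedMeasurable (tensorSpan_le_boundedMeasurable hG) ρ
    simpa only [Pi.add_apply, integral_add (hint hG _) (hint hH _), integral_add (hρ hG) (hρ hH),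
      sum_add_distrib, mul_add] using ihG.add ihH
  | smul c H _ ihH =>
    simpa only [Pi.smul_apply, smul_eq_mul, integral_const_mul, ← mul_sum, mul_left_comm] using
      ihH.const_mul c

theorem measurePreserving_prodMap [IsProbabilityMeasure ν] (h : IsRelIndepSquare ν U ρ)
    (hU : MeasurePreserving U ν ν) (hV : MeasurePreserving V ν ν) (hUV : Function.Commute U V) :
    MeasurePreserving (Prod.map V V) ρ ρ := by
  have := h.isProbabilityMeasure
  have hVV : Measurable (Prod.map V V) := hV.measurable.prodMap hV.measurable
  refine ⟨hVV, measure_ext_of_integral_tensor fun f hf g hg ↦ ?_⟩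
  have hfg := tensor_mem_tensorSpan hf hg
  have hmeas := (tensor_mem_boundedMeasurable hf hg).1
  rw [integral_map hVV.aemeasurable hmeas.aestronglyMeasurable]
  refine tendsto_nhds_unique (h.tendsto_average_integral hU
    (comp_prodMap_mem_tensorSpan hfg hV.measurable hV.measurable)) ?_
  refine (h.tendsto_average_integral hU hfg).congr fun N ↦ ?_
  congr 1
  refine sum_congr rfl fun n _ ↦ ?_
  have hn : Measurable fun x ↦ f x * g (U^[n] x) :=
    hmeas.comp (measurable_id.prodMk (hU.measurable.iterate n))
  rw [← hV.map_eq, integral_map hV.aemeasurable hn.aestronglyMeasurable, hV.map_eq]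
  simp only [Prod.map_apply, (hUV.iterate_left n).eq]

end IsRelIndepSquare

end RelIndepSquare

section Flip

theorem measurable_prodProdProdComm {α β γ δ : Type*} [MeasurableSpace α] [MeasurableSpace β]
    [MeasurableSpace γ] [MeasurableSpace δ] : Measurable (Equiv.prodProdProdComm α β γ δ) :=
  (measurable_fst.fst.prodMk measurable_snd.fst).prodMk
    (measurable_fst.snd.prodMk measurable_snd.snd)

theorem bilinForm_eq_zero_of_nonneg_of_eq_neg_flip {R α V W : Type*} [CommRing R] [LinearOrder R]
    [IsStrictOrderedRing R] [AddCommGroup V] [Module R V] [AddCommGroup W] [Module R W]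
    {B : LinearMap.BilinForm R V} {B' : LinearMap.BilinForm R W}
    (hB : B.IsSymm) (hB' : B'.IsSymm) (hB₀ : ∀ v, 0 ≤ B v v) (hB'₀ : ∀ w, 0 ≤ B' w w)
    (t : α → α → V) (t' : α → α → W)
    (h : ∀ a b c d, B (t a b) (t c d) = -B' (t' a c) (t' b d)) (a b c d : α) :
    B (t a b) (t c d) = 0 := by
  have hdiag (a : α) : B' (t' a a) (t' a a) = 0 :=
    le_antisymm (by linarith [h a a a a, hB₀ (t a a)]) (hB'₀ _)
  have hoff (a b : α) : B (t a b) (t a b) = 0 := by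
    have hsq := LinearMap.BilinForm.apply_sq_le_of_symm B' hB'₀
      (LinearMap.BilinForm.isSymm_iff.mp hB') (t' a a) (t' b b)
    rw [hdiag, zero_mul] at hsq
    rw [h, sq_nonpos_iff _ |>.mp hsq, neg_zero]
  have hsq := LinearMap.BilinForm.apply_sq_le_of_symm B hB₀
    (LinearMap.BilinForm.isSymm_iff.mp hB) (t a b) (t c d)
  rw [hoff, zero_mul] at hsq
  exact sq_nonpos_iff _ |>.mp hsq

variable {Y : Type*} [MeasurableSpace Y] {l l' : Measure ((Y × Y) × (Y × Y))}

/-- The image of a measure on `(Y × Y) × (Y × Y)` under the exchange of the two middle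
coordinates. -/
noncomputable def flipMeasure (l : Measure ((Y × Y) × (Y × Y))) : Measure ((Y × Y) × (Y × Y)) :=
  l.map (Equiv.prodProdProdComm Y Y Y Y)

instance [IsFiniteMeasure l] : IsFiniteMeasure (flipMeasure l) :=
  Measure.isFiniteMeasure_map l _

theorem integral_flipMeasure {H : (Y × Y) × (Y × Y) → ℝ} (hH : Measurable H) :
    ∫ p, H p ∂flipMeasure l = ∫ p, H ((p.1.1, p.2.1), (p.1.2, p.2.2)) ∂l :=
  integral_map measurable_prodProdProdComm.aemeasurable hH.aestronglyMeasurable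

theorem measurePreserving_swap_flipMeasure
    (hl : MeasurePreserving (Prod.map Prod.swap Prod.swap) l l) :
    MeasurePreserving Prod.swap (flipMeasure l) (flipMeasure l) := by
  refine ⟨measurable_swap, ?_⟩
  conv_rhs => rw [flipMeasure, ← hl.map_eq]
  rw [flipMeasure, Measure.map_map measurable_swap measurable_prodProdProdComm,
    Measure.map_map measurable_prodProdProdComm hl.measurable]
  rfl

/-- The bilinear form `(F, G) ↦ ∫ F p.1 * G p.2 ∂l` on the span of tensors. -/
noncomputable def pairing (l : Measure ((Y × Y) × (Y × Y))) [IsFiniteMeasure l] :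
    LinearMap.BilinForm ℝ (tensorSpan Y Y) :=
  have hint (F G : tensorSpan Y Y) : Integrable (fun p ↦ F.1 p.1 * G.1 p.2) l :=
    integrable_of_mem_boundedMeasurable (tensor_mem_boundedMeasurable
      (tensorSpan_le_boundedMeasurable F.2) (tensorSpan_le_boundedMeasurable G.2)) l
  LinearMap.mk₂ ℝ (fun F G ↦ ∫ p, F.1 p.1 * G.1 p.2 ∂l)
    (fun F F' G ↦ by
      simp only [Submodule.coe_add, Pi.add_apply, add_mul, integral_add (hint F G) (hint F' G)])
    (fun c F G ↦ by
      simp only [Submodule.coe_smul, Pi.smul_apply, smul_eq_mul, mul_assoc, integral_const_mul])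
    (fun F G G' ↦ by
      simp only [Submodule.coe_add, Pi.add_apply, mul_add, integral_add (hint F G) (hint F G')])
    (fun c F G ↦ by
      simp only [Submodule.coe_smul, Pi.smul_apply, smul_eq_mul, mul_left_comm,
        integral_const_mul])

variable [IsFiniteMeasure l] [IsFiniteMeasure l']

theorem pairing_apply (F G : tensorSpan Y Y) : pairing l F G = ∫ p, F.1 p.1 * G.1 p.2 ∂l := rfl

theorem pairing_flipMeasure_apply (F G : tensorSpan Y Y) :
    pairing (flipMeasure l) F G = ∫ p, F.1 (p.1.1, p.2.1) * G.1 (p.1.2, p.2.2) ∂l :=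
  integral_flipMeasure (tensor_mem_boundedMeasurable (tensorSpan_le_boundedMeasurable F.2)
    (tensorSpan_le_boundedMeasurable G.2)).1

theorem pairing_isSymm (hl : MeasurePreserving Prod.swap l l) : (pairing l).IsSymm := by
  refine ⟨fun F G ↦ ?_⟩
  have hGF := (tensor_mem_boundedMeasurable (tensorSpan_le_boundedMeasurable G.2)
    (tensorSpan_le_boundedMeasurable F.2)).1
  have hswap := integral_map hl.aemeasurable (f := fun p ↦ G.1 p.1 * F.1 p.2)
    hGF.aestronglyMeasurable
  rw [hl.map_eq] at hswap
  simpa only [pairing_apply, mul_comm, Prod.fst_swap, Prod.snd_swap] using hswap.symm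

theorem pairing_flipMeasure_tensor (a b c d : boundedMeasurable Y) :
    pairing (flipMeasure l) (tensor a b) (tensor c d) = pairing l (tensor a c) (tensor b d) := by
  rw [pairing_flipMeasure_apply, pairing_apply]
  simp only [tensor, mul_mul_mul_comm]

theorem eq_flipMeasure_of_pairing_flipMeasure_le
    (hl : MeasurePreserving Prod.swap l l) (hl' : MeasurePreserving Prod.swap l' l')
    (hfl : MeasurePreserving Prod.swap (flipMeasure l) (flipMeasure l))
    (hfl' : MeasurePreserving Prod.swap (flipMeasure l') (flipMeasure l'))
    (hle : ∀ F, pairing (flipMeasure l') F F ≤ pairing l F F)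
    (hle' : ∀ F, pairing (flipMeasure l) F F ≤ pairing l' F F) : l = flipMeasure l' := by
  refine measure_ext_of_integral_tensor_tensor fun a ha b hb c hc d hd ↦ sub_eq_zero.mp ?_
  refine bilinForm_eq_zero_of_nonneg_of_eq_neg_flip (B := pairing l - pairing (flipMeasure l'))
    (B' := pairing l' - pairing (flipMeasure l))
    ((pairing_isSymm hl).sub (pairing_isSymm hfl')) ((pairing_isSymm hl').sub (pairing_isSymm hfl))
    (fun F ↦ sub_nonneg.mpr (hle F)) (fun F ↦ sub_nonneg.mpr (hle' F)) tensor tensor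
    (fun a b c d ↦ ?_) ⟨a, ha⟩ ⟨b, hb⟩ ⟨c, hc⟩ ⟨d, hd⟩
  simp only [LinearMap.sub_apply, pairing_flipMeasure_tensor, neg_sub]

end Flip

section Exchange

theorem birkhoffAverage_prodMap_apply_iterate {Y : Type*} {T S : Y → Y}
    (hTS : Function.Commute T S) (F : Y × Y → ℝ) (N m : ℕ) (y : Y) :
    birkhoffAverage ℝ (Prod.map T T) F N (y, S^[m] y) =
      birkhoffAverage ℝ T (fun y ↦ F (y, S^[m] y)) N y := by
  simp only [birkhoffAverage, birkhoffSum, Prod.map_iterate, Prod.map_apply,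
    (hTS.iterate_iterate _ m).eq]

variable {Y : Type*} [MeasurableSpace Y] {ν : Measure Y} [IsProbabilityMeasure ν] {T S : Y → Y}
  {ρT ρS : Measure (Y × Y)} {l l' : Measure ((Y × Y) × (Y × Y))}

theorem comp_prodMk_iterate_mem_boundedMeasurable {F : Y × Y → ℝ} (hF : F ∈ tensorSpan Y Y)
    (hS : Measurable S) (m : ℕ) : (fun y ↦ F (y, S^[m] y)) ∈ boundedMeasurable Y :=
  comp_mem_boundedMeasurable (tensorSpan_le_boundedMeasurable hF)
    (measurable_id.prodMk (hS.iterate m))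

namespace IsRelIndepSquare

theorem tendsto_average_integral_condExp_sq (hS : MeasurePreserving S ν ν)
    (hT : MeasurePreserving T ν ν) (hTS : Function.Commute T S) (hρT : IsRelIndepSquare ν T ρT)
    (hl' : IsRelIndepSquare ρT (Prod.map S S) l') [IsFiniteMeasure l'] (F : tensorSpan Y Y) :
    Tendsto (fun M : ℕ ↦ (M : ℝ)⁻¹ * ∑ m ∈ range M,
      ∫ y, (ν[fun y ↦ F.1 (y, S^[m] y) | invariants T]) y ^ 2 ∂ν) atTop
      (𝓝 (pairing (flipMeasure l') F F)) := by
  have := hρT.isProbabilityMeasure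
  have hH : (fun p : (Y × Y) × (Y × Y) ↦ F.1 (p.1.1, p.2.1) * F.1 (p.1.2, p.2.2)) ∈
      tensorSpan (Y × Y) (Y × Y) :=
    mul_mem_tensorSpan (comp_prodMap_mem_tensorSpan F.2 measurable_fst measurable_fst)
      (comp_prodMap_mem_tensorSpan F.2 measurable_snd measurable_snd)
  rw [pairing_flipMeasure_apply]
  refine (hl'.tendsto_average_integral (hρT.measurePreserving_prodMap hT hS hTS) hH).congr
    fun M ↦ ?_
  congr 1
  refine sum_congr rfl fun m _ ↦ ?_
  have hFm := comp_prodMk_iterate_mem_boundedMeasurable F.2 hS.measurable m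
  simpa only [Prod.map_iterate, Prod.map_fst, Prod.map_snd, pow_two] using hρT _ hFm _ hFm

theorem tendsto_average_integral_birkhoffAverage_sq (hS : MeasurePreserving S ν ν)
    (hT : Measurable T) (hTS : Function.Commute T S) (hρS : IsRelIndepSquare ν S ρS)
    {F : Y × Y → ℝ} (hF : F ∈ tensorSpan Y Y) (N : ℕ) :
    Tendsto (fun M : ℕ ↦ (M : ℝ)⁻¹ * ∑ m ∈ range M,
      ∫ y, birkhoffAverage ℝ T (fun y ↦ F (y, S^[m] y)) N y ^ 2 ∂ν) atTop
      (𝓝 (∫ p, birkhoffAverage ℝ (Prod.map T T) F N p ^ 2 ∂ρS)) := by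
  have := hρS.isProbabilityMeasure
  have hA := birkhoffAverage_prodMap_mem_tensorSpan hF hT hT N
  simpa only [Pi.mul_apply, ← pow_two, birkhoffAverage_prodMap_apply_iterate hTS] using
    hρS.tendsto_average_integral hS (mul_mem_tensorSpan hA hA)

theorem pairing_flipMeasure_le (hT : MeasurePreserving T ν ν) (hS : MeasurePreserving S ν ν)
    (hTS : Function.Commute T S) (hρT : IsRelIndepSquare ν T ρT) (hρS : IsRelIndepSquare ν S ρS)
    (hl : IsRelIndepSquare ρS (Prod.map T T) l) (hl' : IsRelIndepSquare ρT (Prod.map S S) l')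
    [IsFiniteMeasure l] [IsFiniteMeasure l'] (F : tensorSpan Y Y) :
    pairing (flipMeasure l') F F ≤ pairing l F F := by
  have := hρS.isProbabilityMeasure
  have hF := tensorSpan_le_boundedMeasurable F.2
  have hTT := hρS.measurePreserving_prodMap hS hT hTS.symm
  have hlim := tendsto_integral_birkhoffAverage_sq hTT (memLp_of_mem_boundedMeasurable hF ρS 2)
  simp only [pow_two (condExp _ _ _ _)] at hlim
  rw [← hl F.1 hF F.1 hF] at hlim
  refine ge_of_tendsto hlim ?_
  filter_upwards [eventually_ne_atTop 0] with N hN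
  refine le_of_tendsto_of_tendsto' (hρT.tendsto_average_integral_condExp_sq hS hT hTS hl' F)
    (hρS.tendsto_average_integral_birkhoffAverage_sq hS hT.measurable hTS F.2 N) fun M ↦ ?_
  refine mul_le_mul_of_nonneg_left (sum_le_sum fun m _ ↦ ?_) (by positivity)
  exact integral_condExp_sq_le_integral_birkhoffAverage_sq hT (memLp_of_mem_boundedMeasurable
    (comp_prodMk_iterate_mem_boundedMeasurable F.2 hS.measurable m) ν 2) hN

theorem measurePreserving_swap_flipMeasure_square (hT : MeasurePreserving T ν ν)
    (hS : MeasurePreserving S ν ν) (hTS : Function.Commute T S) (hρS : IsRelIndepSquare ν S ρS)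
    (hl : IsRelIndepSquare ρS (Prod.map T T) l) :
    MeasurePreserving Prod.swap (flipMeasure l) (flipMeasure l) := by
  have := hρS.isProbabilityMeasure
  exact measurePreserving_swap_flipMeasure (hl.measurePreserving_prodMap
    (hρS.measurePreserving_prodMap hS hT hTS.symm) hρS.measurePreserving_swap fun _ ↦ rfl)

theorem eq_flipMeasure (hT : MeasurePreserving T ν ν) (hS : MeasurePreserving S ν ν)
    (hTS : Function.Commute T S) (hρT : IsRelIndepSquare ν T ρT) (hρS : IsRelIndepSquare ν S ρS)
    (hl : IsRelIndepSquare ρS (Prod.map T T) l) (hl' : IsRelIndepSquare ρT (Prod.map S S) l') :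
    l = flipMeasure l' := by
  have := hρT.isProbabilityMeasure
  have := hρS.isProbabilityMeasure
  have := hl.isProbabilityMeasure
  have := hl'.isProbabilityMeasure
  exact eq_flipMeasure_of_pairing_flipMeasure_le hl.measurePreserving_swap
    hl'.measurePreserving_swap
    (measurePreserving_swap_flipMeasure_square hT hS hTS hρS hl)
    (measurePreserving_swap_flipMeasure_square hS hT hTS.symm hρT hl')
    (pairing_flipMeasure_le hT hS hTS hρT hρS hl hl')
    (pairing_flipMeasure_le hS hT hTS.symm hρS hρT hl' hl)

theorem square_eq_of_commute {ρ : Measure (Y × Y)} (hT : MeasurePreserving T ν ν)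
    (hS : MeasurePreserving S ν ν) (hTS : Function.Commute T S) (hρT : IsRelIndepSquare ν T ρ)
    (hρS : IsRelIndepSquare ν S ρ) (hl : IsRelIndepSquare ρ (Prod.map T T) l)
    (hl' : IsRelIndepSquare ρ (Prod.map S S) l') : l = l' :=
  (eq_flipMeasure hT hS hTS hρT hρS hl hl').trans
    (eq_flipMeasure hS hS (.refl S) hρS hρS hl' hl').symm

end IsRelIndepSquare

end Exchange

section BoxMeasures

theorem condExp_invariants_ae_eq_average {Y : Type*} [MeasurableSpace Y] {ν : Measure Y}
    [IsFiniteMeasure ν] {T : Y → Y} (hT : Ergodic T ν) (f : Y → ℝ) :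
    ν[f | invariants T] =ᵐ[ν] fun _ ↦ ⨍ x, f x ∂ν := by
  rcases eq_zero_or_neZero ν with rfl | _
  · exact ae_zero.le trivial
  have hinv : ν[f | invariants T] ∘ T = ν[f | invariants T] :=
    comp_eq_of_measurable_invariants stronglyMeasurable_condExp.measurable
  obtain ⟨c, hc⟩ := hT.ae_eq_const_of_ae_eq_comp_ae
    integrable_condExp.aestronglyMeasurable (EventuallyEq.of_eq hinv)
  have havg : ⨍ x, f x ∂ν = c := by
    rw [average_eq, ← integral_condExp (invariants_le T), ← average_eq, average_congr hc]
    exact average_const ν c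
  rw [havg]
  exact hc

theorem HKBox.commute_map {X : Type*} {T S : X → X} (h : Function.Commute T S) :
    ∀ k, Function.Commute (HKBox.map T k) (HKBox.map S k)
  | 0 => h
  | k + 1 => fun p ↦ Prod.ext (commute_map h k p.1) (commute_map h k p.2)

namespace IsHKSeq

variable {X : Type*} [MeasurableSpace X] {μ : Measure X} {T : X → X}
  {ν : ∀ k, Measure (HKBox X k)}

theorem isRelIndepSquare (hν : IsHKSeq μ T ν) (k : ℕ) :
    IsRelIndepSquare (ν k) (HKBox.map T k) (ν (k + 1)) :=
  -- `invSigma` unfolds to `MeasurableSpace.invariants`.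
  fun f hf g hg ↦ hν.2 k f g hf.1 hg.1 hf.2 hg.2

theorem isProbabilityMeasure [hμ : IsProbabilityMeasure μ] (hν : IsHKSeq μ T ν) :
    ∀ k, IsProbabilityMeasure (ν k)
  | 0 => hν.1.symm ▸ hμ
  | k + 1 =>
    have := hν.isProbabilityMeasure k
    (hν.isRelIndepSquare k).isProbabilityMeasure

theorem measurePreserving_map [IsProbabilityMeasure μ] (hν : IsHKSeq μ T ν)
    (hT : MeasurePreserving T μ μ) : ∀ k, MeasurePreserving (HKBox.map T k) (ν k) (ν k)
  | 0 => hν.1.symm ▸ hT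
  | k + 1 =>
    have := hν.isProbabilityMeasure k
    have hk := hν.measurePreserving_map hT k
    (hν.isRelIndepSquare k).measurePreserving_prodMap hk hk (.refl _)

end IsHKSeq

theorem box_measures_eq_of_commuting_general {X : Type*} [MeasurableSpace X] (μ : Measure X)
    [IsProbabilityMeasure μ] (T S : X → X) (hT : MeasurePreserving T μ μ)
    (hS : MeasurePreserving S μ μ) (hcomm : T ∘ S = S ∘ T)
    (hcondExp : ∀ f : X → ℝ, μ[f | invSigma T] =ᵐ[μ] μ[f | invSigma S])
    (νT νS : ∀ k, Measure (HKBox X k)) (hνT : IsHKSeq μ T νT) (hνS : IsHKSeq μ S νS) (k : ℕ) :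
    νT k = νS k := by
  have hTS : Function.Commute T S := congrFun hcomm
  suffices hpair : νT k = νS k ∧ νT (k + 1) = νS (k + 1) from hpair.1
  induction k with
  | zero =>
    have h0 : νT 0 = νS 0 := hνT.1.trans hνS.1.symm
    have hμ : νT 0 = μ := hνT.1
    have hsqT := hνT.isRelIndepSquare 0
    have hsqS := hνS.isRelIndepSquare 0
    rw [hμ] at hsqT
    rw [← h0, hμ] at hsqS
    exact ⟨h0, IsRelIndepSquare.eq_of_condExp_ae_eq (Y := X) hsqT hsqS hcondExp⟩
  | succ k ih =>
    obtain ⟨hk, hk'⟩ := ih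
    have := hνT.isProbabilityMeasure k
    have hsqS := hνS.isRelIndepSquare k
    have hsqS' := hνS.isRelIndepSquare (k + 1)
    have hSk := hνS.measurePreserving_map hS k
    rw [← hk] at hSk
    rw [← hk, ← hk'] at hsqS
    rw [← hk'] at hsqS'
    exact ⟨hk', IsRelIndepSquare.square_eq_of_commute (hνT.measurePreserving_map hT k) hSk
      (HKBox.commute_map hTS k) (hνT.isRelIndepSquare k) hsqS
      (hνT.isRelIndepSquare (k + 1)) hsqS'⟩

end BoxMeasures

/-- For commuting invertible ergodic measure preserving transformations `T` and `S` of a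
probability space, the Host–Kra box measures agree: `μ^{[k]}_T = μ^{[k]}_S` for all `k`. -/
theorem box_measures_eq_of_commuting {X : Type*} [MeasurableSpace X]
    (μ : Measure X) [IsProbabilityMeasure μ]
    (T S T' S' : X → X) (hT' : Measurable T') (hS' : Measurable S')
    (hTinv : Function.LeftInverse T' T ∧ Function.RightInverse T' T)
    (hSinv : Function.LeftInverse S' S ∧ Function.RightInverse S' S)
    (hcomm : T ∘ S = S ∘ T)
    (hergT : Ergodic T μ) (hergS : Ergodic S μ)
    (νT νS : ∀ k, Measure (HKBox X k))
    (hνT : IsHKSeq μ T νT) (hνS : IsHKSeq μ S νS) :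
    ∀ k, νT k = νS k := by
  exact box_measures_eq_of_commuting_general μ T S hergT.toMeasurePreserving
    hergS.toMeasurePreserving hcomm (fun f ↦ (condExp_invariants_ae_eq_average hergT f).trans
      (condExp_invariants_ae_eq_average hergS f).symm) νT νS hνT hνS
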